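/- arXiv:1111.6246 — 3 statements merged into one kernel-verified Lean document; each statement's English description precedes it below -/
import Mathlib

section
/- Let C > 0, let μ be a finite nonnegative Borel measure on ℝ × ℝ, and for each s ∈ (0,∞) let ν_s be a finite nonnegative Borel measure on ℝ. Assume that for every s > 0, every τ with 0 < τ < s, and every Borel set B ⊆ ℝ one has ν_s(B) ≤ C·( L¹(B)/τ + μ([s−τ, s+τ]×ℝ) ). Then the set of times s ∈ (0,∞) at which ν_s is not absolutely continuous with respect to Lebesgue measure is at most countable. -/
open MeasureTheory

/-- **Countably many singular times from the decay estimate.** If each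
time-slice measure `ν s` (finite for `s > 0`) satisfies
`ν s (B) ≤ C (L¹(B)/τ + μ([s−τ,s+τ]×ℝ))` for all `0 < τ < s` and Borel `B`,
with `μ` a finite nonnegative measure on the (time × space) plane, then the
set of times `s > 0` at which `ν s` fails to be absolutely continuous with
respect to Lebesgue measure is at most countable. -/
theorem countable_nonAC_times_of_decay_estimate
    (C : ℝ) (hC : 0 < C) (μ : Measure (ℝ × ℝ)) [IsFiniteMeasure μ]
    (ν : ℝ → Measure ℝ) (hfin : ∀ s : ℝ, 0 < s → IsFiniteMeasure (ν s))
    (hest : ∀ s τ : ℝ, 0 < s → 0 < τ → τ < s → ∀ B : Set ℝ, MeasurableSet B →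
      ν s B ≤ ENNReal.ofReal C *
        (volume B / ENNReal.ofReal τ +
          μ (Set.Icc (s - τ) (s + τ) ×ˢ (Set.univ : Set ℝ)))) :
    {s : ℝ | 0 < s ∧ ¬ ν s ≪ volume}.Countable := by
  refine (Measure.countable_meas_level_set_pos (μ := μ) (g := Prod.fst) measurable_fst).mono ?_
  rintro s ⟨hs, hnac⟩
  by_contra hcon
  apply hnac
  have h0 : μ {a : ℝ × ℝ | a.1 = s} = 0 := by simpa using hcon
  refine Measure.AbsolutelyContinuous.mk fun B hB hB0 => ?_
  let τ : ℕ → ℝ := fun n => s / ((n : ℝ) + 2)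
  let F : ℕ → Set (ℝ × ℝ) := fun n => Set.Icc (s - τ n) (s + τ n) ×ˢ (Set.univ : Set ℝ)
  have hτ0 : ∀ n, 0 < τ n := fun n => by simp only [τ]; positivity
  have hτs : ∀ n, τ n < s := fun n => by
    simp only [τ]
    have hn : (0 : ℝ) ≤ n := n.cast_nonneg
    rw [div_lt_iff₀ (by positivity)]
    nlinarith
  have hτa : Antitone τ := fun m n hmn => by
    simp only [τ]
    gcongr
  have hτt : Filter.Tendsto τ Filter.atTop (nhds 0) :=
    Filter.Tendsto.div_atTop tendsto_const_nhds
      (Filter.tendsto_atTop_add_const_right _ _ tendsto_natCast_atTop_atTop)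
  have hF : Antitone F := fun m n hmn => by
    refine Set.prod_mono (Set.Icc_subset_Icc ?_ ?_) subset_rfl
    · linarith [hτa hmn]
    · linarith [hτa hmn]
  have hInter : (⋂ n, F n) ⊆ {a : ℝ × ℝ | a.1 = s} := by
    intro a ha
    have ha' : ∀ n, s - τ n ≤ a.1 ∧ a.1 ≤ s + τ n := fun n => (Set.mem_iInter.1 ha n).1
    have h1 : |a.1 - s| ≤ 0 := ge_of_tendsto' hτt fun n => by
      rw [abs_le]
      constructor <;> linarith [(ha' n).1, (ha' n).2]
    have h2 := abs_nonpos_iff.1 h1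
    show a.1 = s
    linarith
  have hlim : Filter.Tendsto (fun n => μ (F n)) Filter.atTop (nhds 0) := by
    have h := tendsto_measure_iInter_atTop (μ := μ) (s := F)
      (fun n => (measurableSet_Icc.prod MeasurableSet.univ).nullMeasurableSet) hF
      ⟨0, measure_ne_top _ _⟩
    rw [measure_mono_null hInter h0] at h
    exact h
  have hlim2 : Filter.Tendsto (fun n => ENNReal.ofReal C * μ (F n)) Filter.atTop (nhds 0) := by
    simpa using ENNReal.Tendsto.const_mul hlim (Or.inr ENNReal.ofReal_ne_top)
  refine le_antisymm (ge_of_tendsto' hlim2 fun n => ?_) zero_le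
  simpa [hB0] using hest s (τ n) hs (hτ0 n) (hτs n) B hB
end

section
/- Let C > 0, let μ be a finite nonnegative Borel measure on ℝ × ℝ, let s > 0, and let ν be a finite nonnegative Borel measure on ℝ such that for every τ with 0 < τ < s and every Borel set B ⊆ ℝ one has ν(B) ≤ C·( L¹(B)/τ + μ([s−τ, s+τ]×ℝ) ). Then for every Borel set K ⊆ ℝ with L¹(K) = 0 one has μ({s}×ℝ) ≥ ν(K)/C. In particular, if ν is not absolutely continuous with respect to Lebesgue measure, the time-slice {s}×ℝ is an atom of the time marginal of μ. -/
open MeasureTheory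

/-- **Mass on a null set forces an atom of the time marginal.** If the finite
measure `ν` satisfies the decay estimate
`ν(B) ≤ C (L¹(B)/τ + μ([s−τ,s+τ]×ℝ))` for all `0 < τ < s` and Borel `B`, then
for every Borel set `K` that is Lebesgue-null one has
`μ({s}×ℝ) ≥ ν(K)/C`; in particular, if `ν` is not absolutely continuous with
respect to Lebesgue measure, then `μ` charges the time slice `{s}×ℝ`. -/
theorem null_mass_forces_time_atom
    (C : ℝ) (hC : 0 < C) (μ : Measure (ℝ × ℝ)) [IsFiniteMeasure μ]
    (s : ℝ) (hs : 0 < s) (ν : Measure ℝ) [IsFiniteMeasure ν]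
    (hest : ∀ τ : ℝ, 0 < τ → τ < s → ∀ B : Set ℝ, MeasurableSet B →
      ν B ≤ ENNReal.ofReal C *
        (volume B / ENNReal.ofReal τ +
          μ (Set.Icc (s - τ) (s + τ) ×ˢ (Set.univ : Set ℝ)))) :
    (∀ K : Set ℝ, MeasurableSet K → volume K = 0 →
        ν K / ENNReal.ofReal C ≤ μ (({s} : Set ℝ) ×ˢ (Set.univ : Set ℝ))) ∧
    (¬ ν ≪ volume → 0 < μ (({s} : Set ℝ) ×ˢ (Set.univ : Set ℝ))) := by
  have key : ∀ K : Set ℝ, MeasurableSet K → volume K = 0 →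
      ν K / ENNReal.ofReal C ≤ μ (({s} : Set ℝ) ×ˢ (Set.univ : Set ℝ)) := by
    intro K hK hK0
    have hI : (⋂ r > (0 : ℝ), Set.Icc (s - r) (s + r) ×ˢ (Set.univ : Set ℝ))
        = ({s} : Set ℝ) ×ˢ (Set.univ : Set ℝ) := by
      ext ⟨x, y⟩
      simp only [Set.mem_iInter, Set.mem_prod, Set.mem_Icc, Set.mem_univ, and_true,
        Set.mem_singleton_iff]
      constructor
      · intro h
        apply le_antisymm
        · exact le_of_forall_pos_le_add fun r hr => (h r hr).2
        · exact le_of_forall_pos_le_add fun r hr => by linarith [(h r hr).1]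
      · rintro rfl r hr
        constructor <;> linarith
    have hT := tendsto_measure_biInter_gt (μ := μ) (a := (0 : ℝ))
      (s := fun r : ℝ => Set.Icc (s - r) (s + r) ×ˢ (Set.univ : Set ℝ))
      (fun r _ => (measurableSet_Icc.prod MeasurableSet.univ).nullMeasurableSet)
      (fun i j _ hij => Set.prod_mono
        (Set.Icc_subset_Icc (by linarith) (by linarith)) le_rfl)
      ⟨1, one_pos, measure_ne_top _ _⟩
    rw [hI] at hT
    refine ge_of_tendsto hT ?_
    filter_upwards [Ioo_mem_nhdsGT hs] with r hr
    have h := hest r hr.1 hr.2 K hK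
    rw [hK0, ENNReal.zero_div, zero_add] at h
    exact ENNReal.div_le_of_le_mul' h
  refine ⟨key, fun hν => ?_⟩
  by_contra h0
  have h0' := nonpos_iff_eq_zero.mp (not_lt.mp h0)
  apply hν
  refine Measure.AbsolutelyContinuous.mk fun K hK hK0 => ?_
  have h := key K hK hK0
  rw [h0', nonpos_iff_eq_zero, ENNReal.div_eq_zero_iff] at h
  exact h.resolve_right ENNReal.ofReal_ne_top
end

section
/- Let C > 0, let Q : [0,∞) → ℝ be nonincreasing, and for each t > 0 let v⁺_t be a finite nonnegative Borel measure on ℝ such that for every s with 0 ≤ s < t and every Borel set B ⊆ ℝ one has v⁺_t(B) ≤ C·( L¹(B)/(t−s) + Q(s) − Q(t) ). Then the set of times t ∈ (0,∞) at which v⁺_t is not absolutely continuous with respect to Lebesgue measure is at most countable. -/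
open MeasureTheory

/-- **Countably many singular times from the positive-wave decay estimate.**
If `Q` is nonincreasing on `[0,∞)` and the finite measures `v t` (the positive
parts of the wave measures) satisfy
`v t (B) ≤ C (L¹(B)/(t−s) + Q(s) − Q(t))` for all `0 ≤ s < t` and Borel `B`,
then the set of times `t > 0` at which `v t` fails to be absolutely continuous
with respect to Lebesgue measure is at most countable. -/
theorem countable_nonAC_times_of_positive_wave_decay
    (C : ℝ) (hC : 0 < C) (Q : ℝ → ℝ) (hQ : AntitoneOn Q (Set.Ici 0))
    (v : ℝ → Measure ℝ) (hfin : ∀ t : ℝ, 0 < t → IsFiniteMeasure (v t))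
    (hest : ∀ t : ℝ, 0 < t → ∀ s : ℝ, 0 ≤ s → s < t → ∀ B : Set ℝ, MeasurableSet B →
      v t B ≤ ENNReal.ofReal C *
        (volume B / ENNReal.ofReal (t - s) + ENNReal.ofReal (Q s - Q t))) :
    {t : ℝ | 0 < t ∧ ¬ v t ≪ volume}.Countable := by
  refine hQ.countable_not_continuousWithinAt.mono ?_
  rintro t ⟨ht, hac⟩
  refine ⟨ht.le, fun hc => hac ?_⟩
  refine Measure.AbsolutelyContinuous.mk fun B hB hB0 => ?_
  have hIci : Set.Ici (0 : ℝ) ∈ nhds t := Ici_mem_nhds ht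
  have hc1 : Filter.Tendsto Q (nhdsWithin t (Set.Iio t)) (nhds (Q t)) :=
    (hc.continuousAt hIci).tendsto.mono_left nhdsWithin_le_nhds
  have hlim : Filter.Tendsto (fun s => ENNReal.ofReal C * ENNReal.ofReal (Q s - Q t))
      (nhdsWithin t (Set.Iio t)) (nhds 0) := by
    have h1 : Filter.Tendsto (fun s => ENNReal.ofReal (Q s - Q t))
        (nhdsWithin t (Set.Iio t)) (nhds 0) := by
      simpa using ENNReal.tendsto_ofReal (hc1.sub_const (Q t))
    simpa using ENNReal.Tendsto.const_mul (a := ENNReal.ofReal C) h1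
      (Or.inr ENNReal.ofReal_ne_top)
  refine le_antisymm (ge_of_tendsto hlim ?_) zero_le
  filter_upwards [self_mem_nhdsWithin, nhdsWithin_le_nhds hIci] with s hs hs0
  have h := hest t ht s hs0 hs B hB
  rwa [hB0, ENNReal.zero_div, zero_add] at h
end
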